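/- arXiv:2401.11208 — 6 statements merged into one kernel-verified Lean document; each statement's English description precedes it below -/
import Mathlib

section
/- Let p ∈ ℚ[X] be a monic cubic polynomial that is irreducible over ℚ and has three distinct real roots x₁, x₂, x₃, and whose discriminant is the square of a rational number. Then there exists a unique polynomial q ∈ ℚ[X] of degree at most 2 such that q(x₁) = x₂, q(x₂) = x₃, and q(x₃) = x₁. -/
open Polynomial

/-!
The polynomial `q` is the Lagrange interpolant through `(x₁, x₂)`, `(x₂, x₃)`, `(x₃, x₁)`, so over
`ℝ` existence and uniqueness in degree at most 2 are clear; the point is that its coefficients are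
rational. Multiplied by `V = (x₁ - x₂)(x₁ - x₃)(x₂ - x₃)`, each coefficient becomes a polynomial in
the roots that is invariant under cyclic permutations, hence a polynomial with rational
coefficients in `V` and the elementary symmetric functions of the roots. The latter are rational by
`vieta_of_three_roots`, and `V = ±d` is rational because the discriminant `V ^ 2` is a rational
square. Uniqueness holds because a polynomial of degree at most 2 is determined by its values at
three points.
-/

/-- Vieta's formulas for a monic cubic with three distinct roots. -/
theorem vieta_of_three_roots {a b c x y z : ℝ} (hxy : x ≠ y) (hxz : x ≠ z) (hyz : y ≠ z)
    (hx : x ^ 3 + a * x ^ 2 + b * x + c = 0) (hy : y ^ 3 + a * y ^ 2 + b * y + c = 0)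
    (hz : z ^ 3 + a * z ^ 2 + b * z + c = 0) :
    a = -(x + y + z) ∧ b = x * y + x * z + y * z ∧ c = -(x * y * z) := by
  have e1 : x ^ 2 + x * y + y ^ 2 + a * (x + y) + b = 0 :=
    mul_left_cancel₀ (sub_ne_zero.2 hxy) (by linear_combination hx - hy)
  have e2 : x ^ 2 + x * z + z ^ 2 + a * (x + z) + b = 0 :=
    mul_left_cancel₀ (sub_ne_zero.2 hxz) (by linear_combination hx - hz)
  have e3 : x + y + z + a = 0 :=
    mul_left_cancel₀ (sub_ne_zero.2 hyz) (by linear_combination e1 - e2)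
  have ha : a = -(x + y + z) := by linear_combination e3
  have hb : b = x * y + x * z + y * z := by
    subst ha
    linear_combination e1
  refine ⟨ha, hb, ?_⟩
  subst ha hb
  linear_combination hx

/-- Existence, with `s`, `t`, `u` the elementary symmetric functions of the roots and `e` the
square root `(x - y)(x - z)(y - z)` of the discriminant, all assumed rational. -/
theorem exists_cyclic_interpolant {x y z : ℝ} (hxy : x ≠ y) (hxz : x ≠ z) (hyz : y ≠ z)
    {s t u e : ℚ} (hs : (s : ℝ) = x + y + z) (ht : (t : ℝ) = x * y + x * z + y * z)
    (hu : (u : ℝ) = x * y * z) (he : (e : ℝ) = (x - y) * (x - z) * (y - z)) :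
    ∃ q : ℚ[X], q.degree ≤ 2 ∧ aeval x q = y ∧ aeval y q = z ∧ aeval z q = x := by
  have he0 : (e : ℝ) ≠ 0 := by
    rw [he]
    exact mul_ne_zero (mul_ne_zero (sub_ne_zero.2 hxy) (sub_ne_zero.2 hxz)) (sub_ne_zero.2 hyz)
  -- The coefficients of `e` times the Lagrange interpolant. A cyclic sum is half of its
  -- symmetrization plus half of its antisymmetrization, and the latter is a multiple of `e`.
  refine ⟨C ((s ^ 2 - 3 * t) / e) * X ^ 2
    + C ((-(s ^ 3 - 3 * s * t + 3 * u) + (s * t - 3 * u - e) / 2) / e) * X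
    + C (((t * (s ^ 2 - 2 * t) - u * s + e * s) / 2 - (t ^ 2 - 2 * u * s)) / e),
    degree_quadratic_le, ?_, ?_, ?_⟩
  all_goals
    simp only [map_add, map_mul, map_pow, aeval_X, aeval_C, eq_ratCast]
    push_cast
    field_simp
    rw [he, hs, ht, hu]
    ring

/-- For a monic cubic polynomial over ℚ, irreducible, with three
distinct real roots and whose discriminant is the square of a rational number,
there exists a unique polynomial `q ∈ ℚ[X]` of degree at most 2 cyclically
permuting the roots: `q(x₁) = x₂`, `q(x₂) = x₃`, `q(x₃) = x₁`. -/
theorem stmt0 (p : ℚ[X]) (hmonic : p.Monic) (hdeg : p.natDegree = 3)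
    (hirr : Irreducible p)
    (x₁ x₂ x₃ : ℝ) (h12 : x₁ ≠ x₂) (h13 : x₁ ≠ x₃) (h23 : x₂ ≠ x₃)
    (hx₁ : aeval x₁ p = 0) (hx₂ : aeval x₂ p = 0) (hx₃ : aeval x₃ p = 0)
    (hdisc : ∃ d : ℚ, ((x₁ - x₂) * (x₁ - x₃) * (x₂ - x₃))^2 = (d : ℝ)^2) :
    ∃! q : ℚ[X], q.degree ≤ 2 ∧
      aeval x₁ q = x₂ ∧ aeval x₂ q = x₃ ∧ aeval x₃ q = x₁ := by
  have hlead : p.coeff 3 = 1 := by rw [← hdeg]; exact hmonic.coeff_natDegree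
  have hval (x : ℝ) (hx : aeval x p = 0) :
      x ^ 3 + (p.coeff 2 : ℝ) * x ^ 2 + (p.coeff 1 : ℝ) * x + (p.coeff 0 : ℝ) = 0 := by
    rw [aeval_eq_sum_range, hdeg] at hx
    simp only [Finset.sum_range_succ, Finset.sum_range_zero, hlead, Rat.smul_def] at hx
    push_cast at hx
    linear_combination hx
  obtain ⟨ha, hb, hc⟩ :=
    vieta_of_three_roots h12 h13 h23 (hval _ hx₁) (hval _ hx₂) (hval _ hx₃)
  obtain ⟨e, he⟩ : ∃ e : ℚ, (e : ℝ) = (x₁ - x₂) * (x₁ - x₃) * (x₂ - x₃) := by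
    obtain ⟨d, hd⟩ := hdisc
    rcases sq_eq_sq_iff_eq_or_eq_neg.1 hd with h | h
    · exact ⟨d, h.symm⟩
    · exact ⟨-d, by rw [h]; push_cast; rfl⟩
  obtain ⟨q, hq, hq₁, hq₂, hq₃⟩ := exists_cyclic_interpolant h12 h13 h23
    (s := -p.coeff 2) (t := p.coeff 1) (u := -p.coeff 0) (e := e)
    (by push_cast; linarith) hb (by push_cast; linarith) he
  refine ⟨q, ⟨hq, hq₁, hq₂, hq₃⟩, ?_⟩
  rintro r ⟨hr, hr₁, hr₂, hr₃⟩
  apply map_injective (algebraMap ℚ ℝ) (algebraMap ℚ ℝ).injective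
  have hcard : ({x₁, x₂, x₃} : Finset ℝ).card = 3 := Finset.card_eq_three.2
    ⟨x₁, x₂, x₃, h12, h13, h23, rfl⟩
  have hlt {f : ℚ[X]} (hf : f.degree ≤ 2) :
      (f.map (algebraMap ℚ ℝ)).degree < (({x₁, x₂, x₃} : Finset ℝ).card : WithBot ℕ) := by
    rw [hcard, degree_map]
    exact hf.trans_lt (by norm_num)
  refine eq_of_degrees_lt_of_eval_finset_eq {x₁, x₂, x₃} (hlt hr) (hlt hq) ?_
  intro x hx
  simp only [Finset.mem_insert, Finset.mem_singleton] at hx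
  rcases hx with rfl | rfl | rfl <;> simp only [eval_map_algebraMap, *]
end

section
/- Let p = X³ + aX² + bX + c ∈ ℚ[X] be a cubic Galois polynomial (irreducible over ℚ with three distinct real roots and square discriminant). Then 3b ≠ a²; equivalently, the unique polynomial q ∈ ℚ[X] of degree at most 2 that cyclically permutes the roots of p (q(x₁)=x₂, q(x₂)=x₃, q(x₃)=x₁) has degree exactly 2. -/
/-!
Both claims hold because the roots are distinct and real. By Vieta's formulas
`2 (a² - 3b) = (x₁ - x₂)² + (x₁ - x₃)² + (x₂ - x₃)²`, which is positive.
If a cyclically permuting `q` were affine, `q = mX + n`, the root differences would satisfy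
`x₂ - x₃ = m (x₁ - x₂)` and its cyclic shifts, so `m³ = 1` and hence `m = 1` in `ℝ`. Then `q` is
translation by `n`, and a translation of finite order is trivial, contradicting `x₁ ≠ x₂`.
-/

open Polynomial

/-- for a cubic Galois polynomial `X³ + aX² + bX + c` one has
`3b ≠ a²`; equivalently any polynomial of degree at most 2 cyclically permuting
the roots has degree exactly 2. -/
theorem stmt3 (a b c : ℚ) (p : ℚ[X])
    (hp : p = X^3 + C a * X^2 + C b * X + C c)
    (hirr : Irreducible p)
    (x₁ x₂ x₃ : ℝ) (h12 : x₁ ≠ x₂) (h13 : x₁ ≠ x₃) (h23 : x₂ ≠ x₃)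
    (hx₁ : aeval x₁ p = 0) (hx₂ : aeval x₂ p = 0) (hx₃ : aeval x₃ p = 0)
    (hdisc : ∃ d : ℚ, ((x₁ - x₂) * (x₁ - x₃) * (x₂ - x₃))^2 = (d : ℝ)^2) :
    3*b ≠ a^2 ∧
    ∀ q : ℚ[X], q.degree ≤ 2 →
      aeval x₁ q = x₂ → aeval x₂ q = x₃ → aeval x₃ q = x₁ →
      q.degree = 2 := by
  subst hp
  simp only [map_add, map_mul, map_pow, aeval_X, aeval_C, eq_ratCast] at hx₁ hx₂ hx₃
  constructor
  · intro h
    have hR : 3 * (b : ℝ) = (a : ℝ) ^ 2 := by exact_mod_cast h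
    -- Vieta's formulas, by taking divided differences of the cubic at the roots.
    have e12 : x₁ ^ 2 + x₁ * x₂ + x₂ ^ 2 + a * (x₁ + x₂) + b = 0 :=
      mul_left_cancel₀ (sub_ne_zero.2 h12) (by linear_combination hx₁ - hx₂)
    have e13 : x₁ ^ 2 + x₁ * x₃ + x₃ ^ 2 + a * (x₁ + x₃) + b = 0 :=
      mul_left_cancel₀ (sub_ne_zero.2 h13) (by linear_combination hx₁ - hx₃)
    have ea : x₁ + x₂ + x₃ + a = 0 :=
      mul_left_cancel₀ (sub_ne_zero.2 h23) (by linear_combination e12 - e13)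
    have ha : (a : ℝ) = -(x₁ + x₂ + x₃) := by linear_combination ea
    have hb : (b : ℝ) = x₁ * x₂ + x₁ * x₃ + x₂ * x₃ := by
      rw [ha] at e12
      linear_combination e12
    rw [ha, hb] at hR
    have hpos : 0 < (x₁ - x₂) ^ 2 := by
      have := sub_ne_zero.2 h12
      positivity
    nlinarith [sq_nonneg (x₁ - x₃), sq_nonneg (x₂ - x₃)]
  · intro q hq h1 h2 h3
    by_contra hne
    have hlt : q.degree < 2 := lt_of_le_of_ne hq hne
    have hle : q.degree ≤ 1 := Order.le_of_lt_succ hlt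
    obtain ⟨m, n, rfl⟩ : ∃ m n : ℚ, q = C m * X + C n :=
      ⟨_, _, eq_X_add_C_of_degree_le_one hle⟩
    simp only [map_add, map_mul, aeval_X, aeval_C, eq_ratCast] at h1 h2 h3
    have hm3 : (m : ℝ) ^ 3 = 1 :=
      mul_left_cancel₀ (sub_ne_zero.2 h12)
        (by linear_combination m ^ 2 * (h1 - h2) + m * (h2 - h3) + (h3 - h1))
    have hm : (m : ℝ) = 1 := by
      have hmul : ((m : ℝ) - 1) * ((m : ℝ) ^ 2 + m + 1) = 0 := by linear_combination hm3
      rcases mul_eq_zero.1 hmul with h | h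
      · linarith
      · nlinarith [sq_nonneg ((m : ℝ) + 1 / 2)]
    rw [hm] at h1 h2 h3
    exact h12 (by linarith)
end

section
/- Let p ∈ ℚ[X] be a cubic Galois polynomial and q ∈ ℚ[X] the quadratic polynomial cyclically permuting its roots. Set s = q(q(q(X))) − X ∈ ℚ[X] (a polynomial of degree 8). Then p divides s, the polynomial q − X divides s, and the remaining factor p₁ = s / (p · (q − X)) is (up to a nonzero rational scalar) a cubic polynomial in ℚ[X] whose three roots are all real and are cyclically permuted by q, and whose discriminant is the square of a rational number. -/
/-!
The affine change of variable `u = a x + b / 2` conjugates `q = a X² + b X + d` to `f(u) = u² + c`,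
where `c = a d + b / 2 - b² / 4`. If `t` is the trace of a genuine `3`-cycle of `f`, then
`c = -(t² + t + 2)` (`trace_relation`), and the points of the cycle are the roots of
`G_t = u³ - t u² - (t² + 2 t + 3) u + (t³ + 2 t² + 3 t + 1)` (`cycleCubic`, `cycleCubic_of_cycle`).
The relation between `c` and `t` is invariant under `t ↦ -1 - t`, and
`f(f(f(u))) - u = (f(u) - u) · G_t(u) · G_{-1-t}(u)` (`iterate_factor`).

For `t` the trace of the cycle of the roots of `p`, which is rational, `G_t(a X + b / 2) = a³ p`,
so `p₁ = a³ G_{-1-t}(a X + b / 2)`. A real cubic has a real root `v`; modulo `G_t(v) = 0` the orbit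
of `v` under `f` closes up after three steps and consists of the roots of `G_t`
(`orbit_of_root`), with root discriminant `(4 t² + 6 t + 9)²`. Applied to `-1 - t`, this gives the
claims on `p₁`.
-/

/-- The monic cubic whose roots are the `3`-cycle of trace `t` of `u ↦ u² - (t² + t + 2)`. -/
def cycleCubic {R : Type*} [CommRing R] (t u : R) : R :=
  u ^ 3 - t * u ^ 2 - (t ^ 2 + 2 * t + 3) * u + (t ^ 3 + 2 * t ^ 2 + 3 * t + 1)

theorem iterate_factor {R : Type*} [CommRing R] (t c u : R) (hc : c = -(t ^ 2 + t + 2)) :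
    ((u ^ 2 + c) ^ 2 + c) ^ 2 + c - u =
      (u ^ 2 + c - u) * (cycleCubic t u * cycleCubic (-1 - t) u) := by
  subst hc
  unfold cycleCubic
  ring

theorem cycleCubic_exists_root (t : ℝ) : ∃ v : ℝ, cycleCubic t v = 0 := by
  have hcont : ContinuousOn (cycleCubic t) (Set.uIcc (-(t ^ 2 + 10)) t) := by
    unfold cycleCubic
    fun_prop
  have hpos : cycleCubic t t = 1 := by
    unfold cycleCubic
    ring
  have hneg : cycleCubic t (-(t ^ 2 + 10)) ≤ 0 := by
    unfold cycleCubic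
    nlinarith [sq_nonneg t, sq_nonneg (t + 1), sq_nonneg (t ^ 2), sq_nonneg (t * (t + 1)),
      sq_nonneg (t ^ 2 * (t + 1)), sq_nonneg (t ^ 3), sq_nonneg (t * (t - 1)), sq_nonneg (t - 1)]
  have h0 : (0 : ℝ) ∈ Set.uIcc (cycleCubic t (-(t ^ 2 + 10))) (cycleCubic t t) := by
    rw [hpos, Set.mem_uIcc]
    left
    exact ⟨hneg, zero_le_one⟩
  obtain ⟨v, -, hv⟩ := intermediate_value_uIcc hcont h0
  exact ⟨v, hv⟩

/-- The orbit of a root of `cycleCubic t` is a `3`-cycle made of the roots of `cycleCubic t`.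
No distinctness is needed: every claim holds modulo `cycleCubic t v₁ = 0`. -/
theorem orbit_of_root (t c v₁ v₂ v₃ : ℝ) (hc : c = -(t ^ 2 + t + 2))
    (hv : cycleCubic t v₁ = 0) (h₂ : v₂ = v₁ ^ 2 + c) (h₃ : v₃ = v₂ ^ 2 + c) :
    v₁ = v₃ ^ 2 + c ∧ (∀ u, cycleCubic t u = (u - v₁) * (u - v₂) * (u - v₃)) ∧
      (v₁ - v₂) * (v₁ - v₃) * (v₂ - v₃) = 4 * t ^ 2 + 6 * t + 9 := by
  have h₁ : v₁ = v₃ ^ 2 + c := by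
    have := iterate_factor t c v₁ hc
    rw [hv, ← h₂, ← h₃] at this
    linear_combination -this
  have e₁ : v₁ + v₂ + v₃ = t := by
    have hv' := hv
    unfold cycleCubic at hv'
    subst h₃ h₂ hc
    linear_combination (v₁ + t) * hv'
  have e₂ : v₁ * v₂ + v₂ * v₃ + v₃ * v₁ = -(t ^ 2 + 2 * t + 3) := by
    linear_combination (1 / 2) * (v₁ + v₂ + v₃ + t - 1) * e₁ + (1 / 2) * (h₁ + h₂ + h₃) +
      (3 / 2) * hc
  have e₃ : v₁ * v₂ * v₃ = -(t ^ 3 + 2 * t ^ 2 + 3 * t + 1) := by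
    unfold cycleCubic at hv
    linear_combination v₁ * e₂ - v₁ ^ 2 * e₁ + hv
  refine ⟨h₁, fun u => ?_, ?_⟩
  · unfold cycleCubic
    linear_combination u ^ 2 * e₁ - u * e₂ + e₃
  · -- `∑ vᵢ² vᵢ₊₁ - ∑ vᵢ vᵢ₊₁²`, with each square replaced through `vᵢ² = vᵢ₊₁ - c`
    have hA : v₁ ^ 2 * v₂ + v₂ ^ 2 * v₃ + v₃ ^ 2 * v₁ = t - 3 * c - c * t := by
      linear_combination (1 - c) * e₁ - (v₂ + 1) * h₂ - (v₃ + 1) * h₃ - (v₁ + 1) * h₁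
    have hB : v₁ * v₂ ^ 2 + v₂ * v₃ ^ 2 + v₃ * v₁ ^ 2 =
        -(t ^ 2 + 2 * t + 3) - c * t := by
      linear_combination e₂ - c * e₁ - v₁ * h₃ - v₂ * h₁ - v₃ * h₂
    linear_combination hA - hB - 3 * hc

theorem trace_relation (c u₁ u₂ u₃ : ℝ) (h₂ : u₂ = u₁ ^ 2 + c) (h₃ : u₃ = u₂ ^ 2 + c)
    (h₁ : u₁ = u₃ ^ 2 + c) (h12 : u₁ ≠ u₂) :
    c = -((u₁ + u₂ + u₃) ^ 2 + (u₁ + u₂ + u₃) + 2) := by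
  -- the dynatomic polynomial `(f³(u) - u) / (f(u) - u)` in terms of `u`, `f(u)`, `f²(u)`
  have hΦ : (u₂ + u₁) * (u₃ + u₂) + (u₂ + u₁) + 1 = 0 := by
    apply mul_left_cancel₀ (sub_ne_zero.2 h12)
    subst h₃ h₂
    linear_combination h₁
  subst h₃
  obtain rfl : c = u₂ - u₁ ^ 2 := by linear_combination -h₂
  linear_combination (u₂ + 2 - u₁) * hΦ

theorem cycleCubic_of_cycle (c u₁ u₂ u₃ : ℝ) (h₂ : u₂ = u₁ ^ 2 + c) (h₃ : u₃ = u₂ ^ 2 + c)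
    (h₁ : u₁ = u₃ ^ 2 + c) (h12 : u₁ ≠ u₂) (h13 : u₁ ≠ u₃) (h23 : u₂ ≠ u₃) (u : ℝ) :
    cycleCubic (u₁ + u₂ + u₃) u = (u - u₁) * (u - u₂) * (u - u₃) := by
  have hc := trace_relation c u₁ u₂ u₃ h₂ h₃ h₁ h12
  -- multiply the three identities `uᵢ₊₁ - uᵢ₊₂ = (uᵢ - uᵢ₊₁) (uᵢ + uᵢ₊₁)`
  have hprod : (u₁ + u₂) * (u₂ + u₃) * (u₃ + u₁) = 1 := by
    have a₁ : (u₁ - u₂) * (u₁ + u₂) = u₂ - u₃ := by linear_combination h₃ - h₂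
    have a₂ : (u₂ - u₃) * (u₂ + u₃) = u₃ - u₁ := by linear_combination h₁ - h₃
    have a₃ : (u₃ - u₁) * (u₃ + u₁) = u₁ - u₂ := by linear_combination h₂ - h₁
    apply mul_left_cancel₀ (mul_ne_zero (mul_ne_zero (sub_ne_zero.2 h12) (sub_ne_zero.2 h23))
      (sub_ne_zero.2 h13.symm))
    calc _ = ((u₁ - u₂) * (u₁ + u₂)) * ((u₂ - u₃) * (u₂ + u₃)) * ((u₃ - u₁) * (u₃ + u₁)) := by
          ring
      _ = _ := by rw [a₁, a₂, a₃]; ring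
  have e₂ : u₁ * u₂ + u₂ * u₃ + u₃ * u₁ =
      -((u₁ + u₂ + u₃) ^ 2 + 2 * (u₁ + u₂ + u₃) + 3) := by
    linear_combination (1 / 2) * (h₁ + h₂ + h₃) + (3 / 2) * hc
  unfold cycleCubic
  linear_combination (-u + (u₁ + u₂ + u₃)) * e₂ - hprod

/-- A monic cubic with three distinct roots is the product of its linear factors. -/
theorem cubic_eq_prod (α β γ x₁ x₂ x₃ : ℝ) (h12 : x₁ ≠ x₂) (h13 : x₁ ≠ x₃) (h23 : x₂ ≠ x₃)
    (h₁ : x₁ ^ 3 + α * x₁ ^ 2 + β * x₁ + γ = 0) (h₂ : x₂ ^ 3 + α * x₂ ^ 2 + β * x₂ + γ = 0)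
    (h₃ : x₃ ^ 3 + α * x₃ ^ 2 + β * x₃ + γ = 0) :
    α = -(x₁ + x₂ + x₃) ∧
      ∀ x, x ^ 3 + α * x ^ 2 + β * x + γ = (x - x₁) * (x - x₂) * (x - x₃) := by
  have a₂ : x₁ ^ 2 + x₁ * x₂ + x₂ ^ 2 + α * (x₁ + x₂) + β = 0 := by
    apply mul_left_cancel₀ (sub_ne_zero.2 h12)
    linear_combination h₁ - h₂
  have a₃ : x₁ ^ 2 + x₁ * x₃ + x₃ ^ 2 + α * (x₁ + x₃) + β = 0 := by
    apply mul_left_cancel₀ (sub_ne_zero.2 h13)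
    linear_combination h₁ - h₃
  have hα : x₁ + x₂ + x₃ + α = 0 := by
    apply mul_left_cancel₀ (sub_ne_zero.2 h23)
    linear_combination a₂ - a₃
  refine ⟨by linear_combination hα, fun x => ?_⟩
  linear_combination h₁ + (x - x₁) * a₂ + (x - x₁) * (x - x₂) * hα

open Polynomial

/-- with `s = q(q(q(X))) − X` (of degree 8), both `p` and `q − X`
divide `s`, and the complementary factor `p₁ = s / (p·(q − X))` is a cubic
polynomial whose three roots are real, are cyclically permuted by `q`, and
whose discriminant is the square of a rational number. -/
theorem stmt5 (p : ℚ[X]) (hmonic : p.Monic) (hdeg : p.natDegree = 3)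
    (hirr : Irreducible p)
    (x₁ x₂ x₃ : ℝ) (h12 : x₁ ≠ x₂) (h13 : x₁ ≠ x₃) (h23 : x₂ ≠ x₃)
    (hx₁ : aeval x₁ p = 0) (hx₂ : aeval x₂ p = 0) (hx₃ : aeval x₃ p = 0)
    (hdisc : ∃ d : ℚ, ((x₁ - x₂) * (x₁ - x₃) * (x₂ - x₃))^2 = (d : ℝ)^2)
    (q : ℚ[X]) (hqdeg : q.degree = 2)
    (hq₁ : aeval x₁ q = x₂) (hq₂ : aeval x₂ q = x₃) (hq₃ : aeval x₃ q = x₁)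
    (s : ℚ[X]) (hs : s = q.comp (q.comp q) - X) :
    s.natDegree = 8 ∧ p ∣ s ∧ (q - X) ∣ s ∧
    ∀ p₁ : ℚ[X], p₁ = s / (p * (q - X)) →
      p₁.natDegree = 3 ∧
      ∃ y₁ y₂ y₃ : ℝ,
        p₁.map (algebraMap ℚ ℝ) =
          C (algebraMap ℚ ℝ p₁.leadingCoeff) * (X - C y₁) * (X - C y₂) * (X - C y₃) ∧
        aeval y₁ q = y₂ ∧ aeval y₂ q = y₃ ∧ aeval y₃ q = y₁ ∧
        ∃ δ : ℚ, ((y₁ - y₂) * (y₁ - y₃) * (y₂ - y₃))^2 = (δ : ℝ)^2 := by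
  have hqnat : q.natDegree = 2 := natDegree_eq_of_degree_eq_some hqdeg
  have hsdeg : s.natDegree = 8 := by
    rw [hs, natDegree_sub_eq_left_of_natDegree_lt] <;>
      simp [natDegree_comp, hqnat]
  obtain ⟨α, β, γ, hp⟩ : ∃ α β γ : ℚ, p = X ^ 3 + C α * X ^ 2 + C β * X + C γ := by
    refine ⟨p.coeff 2, p.coeff 1, p.coeff 0, ?_⟩
    have h3 : p.coeff 3 = 1 := by
      rw [← hdeg]
      exact hmonic
    conv_lhs => rw [p.as_sum_range_C_mul_X_pow, hdeg]
    simp only [Finset.sum_range_succ, Finset.sum_range_zero, h3, map_one]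
    ring
  obtain ⟨a, b, d, ha, hq⟩ :
      ∃ a b d : ℚ, a ≠ 0 ∧ q = C a * X ^ 2 + C b * X + C d := by
    refine ⟨q.coeff 2, q.coeff 1, q.coeff 0, coeff_ne_zero_of_eq_degree hqdeg, ?_⟩
    conv_lhs => rw [q.as_sum_range_C_mul_X_pow, hqnat]
    simp only [Finset.sum_range_succ, Finset.sum_range_zero]
    ring
  have haR : (a : ℝ) ≠ 0 := by exact_mod_cast ha
  have hpe : ∀ x : ℝ, aeval x p = x ^ 3 + α * x ^ 2 + β * x + γ := fun x => by
    simp [hp]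
  have hqe : ∀ x : ℝ, aeval x q = a * x ^ 2 + b * x + d := fun x => by
    simp [hq]
  rw [hpe] at hx₁ hx₂ hx₃
  rw [hqe] at hq₁ hq₂ hq₃
  obtain ⟨hα, hprod⟩ := cubic_eq_prod α β γ x₁ x₂ x₃ h12 h13 h23 hx₁ hx₂ hx₃
  obtain ⟨c, hcdef⟩ : ∃ c : ℚ, c = a * d + b / 2 - b ^ 2 / 4 := ⟨_, rfl⟩
  obtain ⟨t, htdef⟩ : ∃ t : ℚ, t = -a * α + 3 * b / 2 := ⟨_, rfl⟩
  have hcR : (c : ℝ) = a * d + b / 2 - b ^ 2 / 4 := by rw [hcdef]; push_cast; ring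
  have htR : (a * x₁ + b / 2) + (a * x₂ + b / 2) + (a * x₃ + b / 2) = (t : ℝ) := by
    rw [htdef]
    push_cast
    linear_combination (a : ℝ) * hα
  -- the roots of `p` in the coordinate `u = a x + b / 2` form a cycle of `u² + c`
  have g₂ : (a * x₂ + b / 2 : ℝ) = (a * x₁ + b / 2) ^ 2 + c := by
    linear_combination -(a : ℝ) * hq₁ - hcR
  have g₃ : (a * x₃ + b / 2 : ℝ) = (a * x₂ + b / 2) ^ 2 + c := by
    linear_combination -(a : ℝ) * hq₂ - hcR
  have g₁ : (a * x₁ + b / 2 : ℝ) = (a * x₃ + b / 2) ^ 2 + c := by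
    linear_combination -(a : ℝ) * hq₃ - hcR
  have hne : ∀ x y : ℝ, x ≠ y → (a * x + b / 2 : ℝ) ≠ a * y + b / 2 := by
    intro x y hxy h
    exact hxy (mul_left_cancel₀ haR (by linear_combination h))
  have hctR := trace_relation c _ _ _ g₂ g₃ g₁ (hne _ _ h12)
  have hG := cycleCubic_of_cycle c _ _ _ g₂ g₃ g₁ (hne _ _ h12) (hne _ _ h13) (hne _ _ h23)
  rw [htR] at hctR hG
  have hct : c = -(t ^ 2 + t + 2) := by exact_mod_cast hctR
  -- `G_t(a X + b / 2) = a³ p`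
  have hGp : cycleCubic (C t) (C a * X + C (b / 2)) = C (a ^ 3) * p := by
    apply map_injective (algebraMap ℚ ℝ) (algebraMap ℚ ℝ).injective
    apply Polynomial.funext
    intro x
    have h1 := hG (a * x + b / 2)
    have h2 := hprod x
    unfold cycleCubic at h1 ⊢
    rw [hp]
    simp
    linear_combination h1 - (a : ℝ) ^ 3 * h2
  have hCc : C c = C a * C d + C (b / 2) - C (b / 2) ^ 2 := by
    rw [hcdef, ← C_mul, ← C_pow, ← C_add, ← C_sub]
    congr 1
    ring
  have hCb : C b = 2 * C (b / 2) := by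
    rw [← C_ofNat, ← C_mul]
    congr 1
    ring
  have hCct : C c = -((C t) ^ 2 + C t + 2) := by
    rw [hct]
    simp [C_ofNat]
  have hconj : ∀ r : ℚ[X], C a * q.comp r + C (b / 2) = (C a * r + C (b / 2)) ^ 2 + C c := by
    intro r
    rw [hq]
    simp only [add_comp, mul_comp, C_comp, X_comp, pow_comp]
    rw [hCc, hCb]
    ring
  have hfac : s = (p * (q - X)) * (C (a ^ 3) * cycleCubic (-1 - C t) (C a * X + C (b / 2))) := by
    apply mul_left_cancel₀ (C_ne_zero.2 ha)
    have k1 := hconj X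
    rw [comp_X] at k1
    have k2 := hconj q
    have k3 := hconj (q.comp q)
    have k := iterate_factor (C t) (C c) (C a * X + C (b / 2)) hCct
    rw [← k1, ← k2, ← k3, hGp] at k
    rw [hs]
    linear_combination k
  have hqX : q - X ≠ 0 := by
    intro h
    rw [sub_eq_zero.1 h, natDegree_X] at hqnat
    omega
  have hpq : p * (q - X) ≠ 0 := mul_ne_zero hmonic.ne_zero hqX
  refine ⟨hsdeg, ?_, ?_, ?_⟩
  · rw [hfac, mul_assoc]
    exact dvd_mul_right _ _
  · rw [hfac, mul_comm p, mul_assoc]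
    exact dvd_mul_right _ _
  rintro p₁ hp₁
  rw [hfac, mul_div_cancel_left₀ _ hpq] at hp₁
  obtain ⟨v₁, hv⟩ := cycleCubic_exists_root (-1 - t)
  -- the relation between `c` and `t` is invariant under `t ↦ -1 - t`
  obtain ⟨hv₁, hroots, hδ⟩ := orbit_of_root (-1 - t) c v₁ (v₁ ^ 2 + c) ((v₁ ^ 2 + c) ^ 2 + c)
    (by rw [hctR]; ring) hv rfl rfl
  obtain ⟨v₂, hv₂⟩ : ∃ v, v = v₁ ^ 2 + (c : ℝ) := ⟨_, rfl⟩
  rw [← hv₂] at hv₁ hroots hδ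
  obtain ⟨v₃, hv₃⟩ : ∃ v, v = v₂ ^ 2 + (c : ℝ) := ⟨_, rfl⟩
  rw [← hv₃] at hv₁ hroots hδ
  have hmap : p₁.map (algebraMap ℚ ℝ) =
      C ((a : ℝ) ^ 6) * (X - C ((v₁ - b / 2) / a)) * (X - C ((v₂ - b / 2) / a)) *
        (X - C ((v₃ - b / 2) / a)) := by
    apply Polynomial.funext
    intro x
    have h1 := hroots (a * x + b / 2)
    have h2 : ∀ v : ℝ, (a : ℝ) * (x - (v - b / 2) / a) = a * x + b / 2 - v := by
      intro v
      field_simp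
      ring
    rw [← h2, ← h2, ← h2] at h1
    unfold cycleCubic at h1 hp₁
    rw [hp₁]
    simp
    linear_combination (a : ℝ) ^ 3 * h1
  have ha6 : (a : ℝ) ^ 6 ≠ 0 := pow_ne_zero _ haR
  have hlead : algebraMap ℚ ℝ p₁.leadingCoeff = (a : ℝ) ^ 6 := by
    rw [← leadingCoeff_map, hmap]
    simp only [leadingCoeff_mul, leadingCoeff_C, leadingCoeff_X_sub_C, mul_one]
  have hqv : ∀ v w : ℝ, w = v ^ 2 + c →
      aeval ((v - b / 2) / a : ℝ) q = (w - b / 2) / a := by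
    intro v w h
    rw [hqe, h, hcR]
    field_simp
    ring
  refine ⟨?_, (v₁ - b / 2) / a, (v₂ - b / 2) / a, (v₃ - b / 2) / a, ?_, hqv _ _ hv₂, hqv _ _ hv₃,
    hqv _ _ hv₁, (4 * (-1 - t) ^ 2 + 6 * (-1 - t) + 9) / a ^ 3, ?_⟩
  · rw [← natDegree_map (algebraMap ℚ ℝ), hmap, mul_assoc, mul_assoc, natDegree_C_mul ha6,
      natDegree_mul (X_sub_C_ne_zero _) (mul_ne_zero (X_sub_C_ne_zero _) (X_sub_C_ne_zero _)),
      natDegree_mul (X_sub_C_ne_zero _) (X_sub_C_ne_zero _)]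
    simp only [natDegree_X_sub_C]
  · rw [hlead, hmap]
  · push_cast
    rw [← hδ]
    field_simp
    ring
end

section
/- Let a, k ∈ ℚ with k > 0 and 4a − 27 = k², and suppose p = X³ − aX − a is a cubic Galois polynomial with real roots x₁, x₂, x₃. Then the polynomials q₁ = (3/k)X² − ((k+9)/(2k))X − 2a/k and q₂ = −(3/k)X² + ((9−k)/(2k))X + 2a/k each cyclically permute the roots of p, and they do so in opposite cyclic orders: if q₁(x₁)=x₂, q₁(x₂)=x₃, q₁(x₃)=x₁, then q₂(x₁)=x₃, q₂(x₃)=x₂, q₂(x₂)=x₁. -/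
open Polynomial

/-!
By Vieta, the roots satisfy `x + y + z = 0` and `xy + yz + zx = -a`, so that
`(y - z)² = 4a - 3x²` and `(x - y)(x - z) = 3x² - a`. Writing
`D = (x - y)(y - z)(x - z)`, reduction modulo `x³ = ax + a` gives
`D (y - z) = a (6x² - 9x - 4a)`. Since `D² = a²(4a - 27) = (ak)²`, either `D = ak` or `D = -ak`.
If `D = ak`, dividing by `ak` gives `y - z = (6x² - 9x - 4a)/k`, and with `y + z = -x` this says
`y = q₁(x)` (`apply_root`); as `D` is invariant under cyclic shifts, `q₁` permutes the roots as
`x → y → z → x`. If `D = -ak`, the same applies after exchanging two of the roots.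
Finally `q₁ + q₂ = -X`, so `q₂(x)` is the third root `-x - q₁(x)`.
-/

/-- The first two of Vieta's relations for three distinct roots of `X³ - aX - a`, obtained by
dividing differences of the root equations by differences of the roots. -/
lemma vieta {a x y z : ℝ} (hxy : x ≠ y) (hxz : x ≠ z) (hyz : y ≠ z)
    (hx : x ^ 3 - a * x - a = 0) (hy : y ^ 3 - a * y - a = 0) (hz : z ^ 3 - a * z - a = 0) :
    x + y + z = 0 ∧ x * y + y * z + z * x = -a := by
  have hxy2 : x ^ 2 + x * y + y ^ 2 - a = 0 :=
    mul_left_cancel₀ (sub_ne_zero.2 hxy) (by linear_combination hx - hy)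
  have hxz2 : x ^ 2 + x * z + z ^ 2 - a = 0 :=
    mul_left_cancel₀ (sub_ne_zero.2 hxz) (by linear_combination hx - hz)
  have hs : x + y + z = 0 :=
    mul_left_cancel₀ (sub_ne_zero.2 hyz) (by linear_combination hxy2 - hxz2)
  exact ⟨hs, by linear_combination (x + y) * hs - hxy2⟩

/-- If the square root `(x - y)(y - z)(x - z)` of the discriminant is `ak` (and not `-ak`),
then `q₁` sends `x` to `y`. -/
lemma apply_root {a k x y z : ℝ} (ha : a ≠ 0) (hk : k ≠ 0) (hs : x + y + z = 0)
    (he : x * y + y * z + z * x = -a) (hx : x ^ 3 - a * x - a = 0)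
    (hD : (x - y) * (y - z) * (x - z) = a * k) :
    3 / k * x ^ 2 - (k + 9) / (2 * k) * x - 2 * a / k = y := by
  obtain rfl : z = -x - y := by linear_combination hs
  have ha' : a = x ^ 2 + x * y + y ^ 2 := by linear_combination he
  have key : 6 * x ^ 2 - 9 * x - 4 * a = k * (2 * y + x) := by
    apply mul_left_cancel₀ ha
    have h1 : (2 * y + x) ^ 2 = 4 * a - 3 * x ^ 2 := by rw [ha']; ring
    have h2 : (x - y) * (2 * x + y) = 3 * x ^ 2 - a := by rw [ha']; ring
    -- after multiplication by `a`, both sides of the goal equal `(3x² - a)(4a - 3x²)` modulo `x³ = ax + a`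
    have h3 : (x - y) * (2 * x + y) * (2 * y + x) ^ 2
        = (3 * x ^ 2 - a) * (4 * a - 3 * x ^ 2) := by rw [h1, h2]
    linear_combination (2 * y + x) * hD - h3 + 9 * x * hx
  field_simp
  linear_combination key

/-- for a cubic Galois polynomial `p = X³ − aX − a` with
`4a − 27 = k²`, `k > 0`, the quadratics `q₁ = (3/k)X² − ((k+9)/(2k))X − 2a/k`
and `q₂ = −(3/k)X² + ((9−k)/(2k))X + 2a/k` each cyclically permute the roots of
`p`, and they do so in opposite cyclic orders. -/
theorem stmt8 (a k : ℚ) (hk : 0 < k) (hak : 4*a - 27 = k^2)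
    (p : ℚ[X]) (hp : p = X^3 - C a * X - C a) (hirr : Irreducible p)
    (x₁ x₂ x₃ : ℝ) (h12 : x₁ ≠ x₂) (h13 : x₁ ≠ x₃) (h23 : x₂ ≠ x₃)
    (hx₁ : aeval x₁ p = 0) (hx₂ : aeval x₂ p = 0) (hx₃ : aeval x₃ p = 0)
    (q₁ q₂ : ℚ[X])
    (hq₁ : q₁ = C (3/k) * X^2 - C ((k+9)/(2*k)) * X - C (2*a/k))
    (hq₂ : q₂ = - C (3/k) * X^2 + C ((9-k)/(2*k)) * X + C (2*a/k)) :
    ((aeval x₁ q₁ = x₂ ∧ aeval x₂ q₁ = x₃ ∧ aeval x₃ q₁ = x₁) ∨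
     (aeval x₁ q₁ = x₃ ∧ aeval x₃ q₁ = x₂ ∧ aeval x₂ q₁ = x₁)) ∧
    ((aeval x₁ q₂ = x₂ ∧ aeval x₂ q₂ = x₃ ∧ aeval x₃ q₂ = x₁) ∨
     (aeval x₁ q₂ = x₃ ∧ aeval x₃ q₂ = x₂ ∧ aeval x₂ q₂ = x₁)) ∧
    ((aeval x₁ q₁ = x₂ ∧ aeval x₂ q₁ = x₃ ∧ aeval x₃ q₁ = x₁) →
      (aeval x₁ q₂ = x₃ ∧ aeval x₃ q₂ = x₂ ∧ aeval x₂ q₂ = x₁)) := by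
  have hkR : (k : ℝ) ≠ 0 := by exact_mod_cast hk.ne'
  have hakR : 4 * (a : ℝ) - 27 = (k : ℝ) ^ 2 := by exact_mod_cast hak
  have haR : (a : ℝ) ≠ 0 := by
    have := sq_nonneg (k : ℝ)
    intro h
    rw [h] at hakR
    linarith
  have ep (x : ℝ) : aeval x p = x ^ 3 - a * x - a := by
    simp [hp]
  have e1 (x : ℝ) : aeval x q₁ = 3 / k * x ^ 2 - (k + 9) / (2 * k) * x - 2 * a / k := by
    simp [hq₁]
  have e2 (x : ℝ) : aeval x q₂ = -x - aeval x q₁ := by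
    rw [e1]
    simp [hq₂]
    field_simp
    ring
  rw [ep] at hx₁ hx₂ hx₃
  obtain ⟨hs, he⟩ := vieta h12 h13 h23 hx₁ hx₂ hx₃
  have hD : ((x₁ - x₂) * (x₂ - x₃) * (x₁ - x₃)) ^ 2 = ((a : ℝ) * k) ^ 2 := by
    have h3 : x₁ * x₂ * x₃ = a := by linear_combination hx₁ - x₁ ^ 2 * hs + x₁ * he
    rw [mul_pow (a : ℝ), ← hakR]
    obtain rfl : x₃ = -x₁ - x₂ := by linear_combination hs
    have ha' : (a : ℝ) = x₁ ^ 2 + x₁ * x₂ + x₂ ^ 2 := by linear_combination he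
    -- the discriminant is `4e³ - 27n²`, where `e = a` is minus the second and `n = a` the third
    -- elementary symmetric function of the roots
    have hd : ((x₁ - x₂) * (x₂ - (-x₁ - x₂)) * (x₁ - (-x₁ - x₂))) ^ 2
        = 4 * (x₁ ^ 2 + x₁ * x₂ + x₂ ^ 2) ^ 3 - 27 * (x₁ * x₂ * (-x₁ - x₂)) ^ 2 := by ring
    rw [hd, ← ha', h3]
    ring
  simp only [e2]
  rcases sq_eq_sq_iff_eq_or_eq_neg.1 hD with hD | hD
  · have r1 := (e1 x₁).trans (apply_root haR hkR hs he hx₁ hD)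
    have r2 := (e1 x₂).trans (apply_root (y := x₃) (z := x₁) haR hkR (by linarith) (by linarith) hx₂
      (by linear_combination hD))
    have r3 := (e1 x₃).trans (apply_root (y := x₁) (z := x₂) haR hkR (by linarith) (by linarith) hx₃
      (by linear_combination hD))
    rw [r1, r2, r3]
    exact ⟨.inl ⟨rfl, rfl, rfl⟩, .inr ⟨by linarith, by linarith, by linarith⟩,
      fun _ => ⟨by linarith, by linarith, by linarith⟩⟩
  · have r1 := (e1 x₁).trans (apply_root (y := x₃) (z := x₂) haR hkR (by linarith) (by linarith) hx₁
      (by linear_combination -hD))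
    have r3 := (e1 x₃).trans (apply_root (y := x₂) (z := x₁) haR hkR (by linarith) (by linarith) hx₃
      (by linear_combination -hD))
    have r2 := (e1 x₂).trans (apply_root (y := x₁) (z := x₃) haR hkR (by linarith) (by linarith) hx₂
      (by linear_combination -hD))
    rw [r1, r2, r3]
    exact ⟨.inr ⟨rfl, rfl, rfl⟩, .inl ⟨by linarith, by linarith, by linarith⟩,
      fun h => absurd h.1.symm h23⟩
end

section
/- Let a, k ∈ ℚ with k > 0 and 4a − 27 = k², and suppose p = X³ − aX − a is a cubic Galois polynomial. Let q₁ = (3/k)X² − ((k+9)/(2k))X − 2a/k and let p₁ ∈ ℚ[X] be the cubic factor of q₁(q₁(q₁(X))) − X complementary to p·(q₁ − X). Then p₁ is linearly equivalent to X³ − bX − b with b = (27/4)·(31k² + 108k + 729)/(2k + 27)²: there exist α, β, λ ∈ ℚ with α ≠ 0, λ ≠ 0 such that λ·p₁(αX + β) = X³ − bX − b. In particular the characteristic number of the class of p₁ is k₁ = 27k/(2k + 27). -/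
/-!
The cubic cofactor can be written down explicitly. Eliminating `a = (k² + 27)/4`, the polynomial
`q₁(q₁(q₁(X))) − X` is divisible by `p·(q₁ − X)` with quotient
`(3/k)⁶ (X³ − ((k+27)/6) X² − ((5k²+9k)/18) X + (2k³+45k²+162k+729)/54)` (`coupled_factor`),
so by cancellation in the domain `ℚ[X]` this quotient is `p₁`. The shift `β = (k+27)/18` removes
its quadratic term, leaving `Y³ − AY − B`, and the scaling `α = B/A = −(2k+27)/27` makes the linear
and constant coefficients agree, giving `X³ − bX − b`.
-/

open Polynomial

/-- The explicit cubic cofactor of `p·(q₁ − X)` in `q₁(q₁(q₁(X))) − X`, normalised by its leading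
coefficient. -/
noncomputable def monicCoupled (k : ℚ) : ℚ[X] :=
  X^3 - C ((k+27)/6) * X^2 - C ((5*k^2+9*k)/18) * X + C ((2*k^3+45*k^2+162*k+729)/54)

theorem coupled_factor (a k : ℚ) (hk : k ≠ 0) (ha : a = (k^2+27)/4)
    (q : ℚ[X]) (hq : q = C (3/k) * X^2 - C ((k+9)/(2*k)) * X - C (2*a/k)) :
    q.comp (q.comp q) - X
      = (X^3 - C a * X - C a) * (q - X) * (C ((3/k)^6) * monicCoupled k) := by
  refine Polynomial.funext fun r => ?_
  subst hq ha
  simp only [monicCoupled, eval_sub, eval_add, eval_mul, eval_comp, eval_pow, eval_C, eval_X]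
  field_simp
  ring

theorem monicCoupled_comp (k r : ℚ) :
    (monicCoupled k).eval (-(2*k+27)/27 * r + (k+27)/18)
      = (-(2*k+27)/27)^3 * r^3
        - (31*k^2+108*k+729)/108 * (-(2*k+27)/27) * (r + 1) := by
  simp only [monicCoupled, eval_sub, eval_add, eval_mul, eval_pow, eval_C, eval_X]
  ring

/-- the coupled polynomial `p₁` of `p = X³ − aX − a`
(via `q₁`) is linearly equivalent to `X³ − bX − b` with
`b = (27/4)(31k² + 108k + 729)/(2k + 27)²`, and the characteristic number of
its class is `k₁ = 27k/(2k + 27)`. -/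
theorem stmt9 (a k : ℚ) (hk : 0 < k) (hak : 4*a - 27 = k^2)
    (p : ℚ[X]) (hp : p = X^3 - C a * X - C a) (hirr : Irreducible p)
    (x₁ x₂ x₃ : ℝ) (h12 : x₁ ≠ x₂) (h13 : x₁ ≠ x₃) (h23 : x₂ ≠ x₃)
    (hx₁ : aeval x₁ p = 0) (hx₂ : aeval x₂ p = 0) (hx₃ : aeval x₃ p = 0)
    (q₁ : ℚ[X]) (hq₁ : q₁ = C (3/k) * X^2 - C ((k+9)/(2*k)) * X - C (2*a/k))
    (p₁ : ℚ[X]) (hp₁ : q₁.comp (q₁.comp q₁) - X = p * (q₁ - X) * p₁)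
    (b : ℚ) (hb : b = (27/4) * (31*k^2 + 108*k + 729)/(2*k + 27)^2) :
    (∃ α β lam : ℚ, α ≠ 0 ∧ lam ≠ 0 ∧
      C lam * p₁.comp (C α * X + C β) = X^3 - C b * X - C b) ∧
    4*b - 27 = (27*k/(2*k + 27))^2 := by
  have hk0 : k ≠ 0 := hk.ne'
  have hm : 2*k + 27 ≠ 0 := by positivity
  have ha : a = (k^2+27)/4 := by linarith
  refine ⟨?_, ?_⟩
  · have hfac := coupled_factor a k hk0 ha q₁ hq₁
    -- `q₁ - X` is nonzero because its quadratic coefficient `3/k` is.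
    have hq0 : q₁ - X ≠ 0 := by
      intro h
      have h2 := congrArg (fun f : ℚ[X] => f.coeff 2) h
      simp [hq₁, coeff_X, coeff_C, hk0] at h2
    have hp₁' : p₁ = C ((3/k)^6) * monicCoupled k := by
      rw [← hp, hp₁] at hfac
      exact mul_left_cancel₀ (mul_ne_zero hirr.ne_zero hq0) hfac
    refine ⟨-(2*k+27)/27, (k+27)/18, (k/3)^6 / (-(2*k+27)/27)^3, ?_, ?_, ?_⟩
    · exact div_ne_zero (neg_ne_zero.mpr hm) (by norm_num)
    · exact div_ne_zero (by positivity)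
        (pow_ne_zero _ (div_ne_zero (neg_ne_zero.mpr hm) (by norm_num)))
    · refine Polynomial.funext fun r => ?_
      subst hb
      rw [hp₁']
      simp only [eval_sub, eval_add, eval_mul, eval_comp, eval_pow, eval_C, eval_X,
        monicCoupled_comp]
      field_simp
      ring
  · subst hb
    field_simp
    ring
end

section
/- Let a, k ∈ ℚ with k > 0, k ≠ 27/2, and 4a − 27 = k², and suppose p = X³ − aX − a is a cubic Galois polynomial. Let q₂ = −(3/k)X² + ((9−k)/(2k))X + 2a/k and let p₂ ∈ ℚ[X] be the cubic factor of q₂(q₂(q₂(X))) − X complementary to p·(q₂ − X). Then p₂ is linearly equivalent to X³ − cX − c with c = (27/4)·(31k² − 108k + 729)/(2k − 27)²: there exist α, β, λ ∈ ℚ with α ≠ 0, λ ≠ 0 such that λ·p₂(αX + β) = X³ − cX − c. In particular the characteristic number of the class of p₂ is k₂ = 27k/|2k − 27|. -/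
open Polynomial

/-!
Writing `a = (k² + 27)/4`, polynomial division gives the complementary cubic factor explicitly:
`p₂ = (3/k)⁶ (X³ + (k/6 - 9/2) X² + (k/2 - 5k²/18) X + (27/2 - 3k + 5k²/6 - k³/27))`.
Translating by `β = 3/2 - k/18` removes the quadratic term and leaves
`X³ - P X - Q` with `P = (31k² - 108k + 729)/108` and `Q/P = (2k - 27)/27`; rescaling by
`α = Q/P` then equalises the last two coefficients, with common value `c = P/α²`.
The hypothesis `k ≠ 27/2` is exactly `α ≠ 0`. The characteristic number is a direct computation.
-/

/-- The explicit cubic factor of `q₂(q₂(q₂(X))) - X` complementary to `p (q₂ - X)`. -/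
noncomputable def coupledCubic (k : ℚ) : ℚ[X] :=
  C ((3/k)^6) * (X^3 + C (k/6 - 9/2) * X^2 + C (k/2 - 5*k^2/18) * X
    + C (27/2 - 3*k + 5*k^2/6 - k^3/27))

/-- Polynomials over `ℚ` are determined by their values, so the factorization reduces to an
identity of rational functions in `k` and the evaluation point. -/
lemma iterate_sub_X_eq (a k : ℚ) (hk : k ≠ 0) (ha : a = (k^2 + 27)/4) (q : ℚ[X])
    (hq : q = - C (3/k) * X^2 + C ((9-k)/(2*k)) * X + C (2*a/k)) :
    q.comp (q.comp q) - X = (X^3 - C a * X - C a) * (q - X) * coupledCubic k := by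
  subst hq ha
  apply Polynomial.funext
  intro x
  simp only [coupledCubic, eval_sub, eval_comp, eval_add, eval_mul, eval_neg, eval_C, eval_pow,
    eval_X]
  field_simp
  ring

lemma coupledCubic_comp (k c : ℚ) (hk : k ≠ 0) (hk' : 2*k - 27 ≠ 0)
    (hc : c = (27/4) * (31*k^2 - 108*k + 729)/(2*k - 27)^2) :
    C (k^6/729 * (27/(2*k - 27))^3) *
      (coupledCubic k).comp (C ((2*k - 27)/27) * X + C (3/2 - k/18)) = X^3 - C c * X - C c := by
  subst hc
  -- The denominator `d = 2k - 27` becomes the variable, so that clearing it is syntactic.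
  obtain ⟨d, hd⟩ : ∃ d, d = 2*k - 27 := ⟨_, rfl⟩
  rw [← hd] at hk' ⊢
  obtain rfl : k = (d + 27)/2 := by linarith
  have hk2 : d + 27 ≠ 0 := fun h => hk (by rw [h, zero_div])
  apply Polynomial.funext
  intro x
  simp only [coupledCubic, eval_sub, eval_comp, eval_add, eval_mul, eval_C, eval_pow, eval_X]
  field_simp
  ring

/-- the coupled polynomial `p₂` of `p = X³ − aX − a`
(via `q₂`) is linearly equivalent to `X³ − cX − c` with
`c = (27/4)(31k² − 108k + 729)/(2k − 27)²`, and the characteristic number of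
its class is `k₂ = 27k/|2k − 27|`. -/
theorem stmt10 (a k : ℚ) (hk : 0 < k) (hk' : k ≠ 27/2) (hak : 4*a - 27 = k^2)
    (p : ℚ[X]) (hp : p = X^3 - C a * X - C a) (hirr : Irreducible p)
    (x₁ x₂ x₃ : ℝ) (h12 : x₁ ≠ x₂) (h13 : x₁ ≠ x₃) (h23 : x₂ ≠ x₃)
    (hx₁ : aeval x₁ p = 0) (hx₂ : aeval x₂ p = 0) (hx₃ : aeval x₃ p = 0)
    (q₂ : ℚ[X]) (hq₂ : q₂ = - C (3/k) * X^2 + C ((9-k)/(2*k)) * X + C (2*a/k))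
    (p₂ : ℚ[X]) (hp₂ : q₂.comp (q₂.comp q₂) - X = p * (q₂ - X) * p₂)
    (c : ℚ) (hc : c = (27/4) * (31*k^2 - 108*k + 729)/(2*k - 27)^2) :
    (∃ α β lam : ℚ, α ≠ 0 ∧ lam ≠ 0 ∧
      C lam * p₂.comp (C α * X + C β) = X^3 - C c * X - C c) ∧
    4*c - 27 = (27*k/|2*k - 27|)^2 := by
  have hk0 : k ≠ 0 := hk.ne'
  have hd : 2*k - 27 ≠ 0 := fun h => hk' (by linarith)
  have ha : a = (k^2 + 27)/4 := by linarith
  have hq0 : q₂ - X ≠ 0 := by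
    intro h
    have h2 := congrArg (fun f => coeff f 2) h
    simp [hq₂, coeff_X, hk0] at h2
  have hfac : p₂ = coupledCubic k := by
    have h := iterate_sub_X_eq a k hk0 ha q₂ hq₂
    rw [hp₂, ← hp] at h
    exact mul_left_cancel₀ (mul_ne_zero hirr.ne_zero hq0) h
  refine ⟨⟨(2*k - 27)/27, 3/2 - k/18, k^6/729 * (27/(2*k - 27))^3,
    by positivity, by positivity, ?_⟩, ?_⟩
  · rw [hfac]
    exact coupledCubic_comp k c hk0 hd hc
  · rw [div_pow, sq_abs, hc]
    clear * - hd
    obtain ⟨d, hdk⟩ : ∃ d, d = 2*k - 27 := ⟨_, rfl⟩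
    rw [← hdk] at hd ⊢
    obtain rfl : k = (d + 27)/2 := by linarith
    field_simp
    ring
end
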